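/- arXiv:2509.11146 — 2 statements merged into one kernel-verified Lean document; each statement's English description precedes it below -/
import Mathlib

section
/- Let B be a finite positive definite metric space and A ⊆ B a subset with the induced metric. Then |A| ≤ |B|, where |·| denotes magnitude. -/
/-!
Extending a vector on `A` by zero changes neither the sum of its entries nor its quadratic form,
so every value of the quotient on `A` is also a value of the quotient on `B`
(`magRatio_extend`). The supremum over `A` is therefore bounded by the one over `B`, once the latter
is known to be a genuine supremum. Boundedness (`bddAbove_magRatio`) is the Cauchy–Schwarz inequality
for the inner product defined by `Z_B`: with the weighting `v = Z_B⁻¹ 1` one has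
`(∑ w)² = (vᵀ Z_B w)² ≤ (∑ v) (wᵀ Z_B w)`.
-/

open scoped BigOperators

/-- The similarity matrix `Z_X = (e^{-d(x,y)})` of a finite metric space. -/
noncomputable def simMat (X : Type*) [Fintype X] [MetricSpace X] : Matrix X X ℝ :=
  Matrix.of fun x y => Real.exp (-dist x y)

/-- The quotient `(Σ w_x)² / (Σ e^{-d(x,y)} w_x w_y)`. -/
noncomputable def magRatio {X : Type*} [Fintype X] [MetricSpace X] (w : X → ℝ) : ℝ :=
  (∑ x, w x) ^ 2 / ∑ x, ∑ y, Real.exp (-dist x y) * w x * w y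

/-- The magnitude: the supremum of the quotient over nonzero vectors. -/
noncomputable def magnitude (X : Type*) [Fintype X] [MetricSpace X] : ℝ :=
  sSup {r : ℝ | ∃ w : X → ℝ, w ≠ 0 ∧ r = magRatio w}

open Matrix in
lemma quadForm_eq {X : Type*} [Fintype X] [MetricSpace X] (w : X → ℝ) :
    ∑ x, ∑ y, Real.exp (-dist x y) * w x * w y = w ⬝ᵥ (simMat X *ᵥ w) := by
  simp only [dotProduct, mulVec, simMat, Matrix.of_apply, Finset.mul_sum]
  exact Finset.sum_congr rfl fun x _ => Finset.sum_congr rfl fun y _ => by ring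

open Matrix in
/-- Without this bound the supremum defining the magnitude would take the junk value `0`. -/
lemma bddAbove_magRatio {X : Type*} [Fintype X] [MetricSpace X] (hpd : (simMat X).PosDef) :
    BddAbove {r : ℝ | ∃ w : X → ℝ, w ≠ 0 ∧ r = magRatio w} := by
  classical
  -- the weighting of `X`
  obtain ⟨v, hv⟩ : ∃ v : X → ℝ, simMat X *ᵥ v = 1 :=
    ⟨(simMat X)⁻¹ *ᵥ 1, by
      rw [mulVec_mulVec, mul_nonsing_inv _ ((isUnit_iff_isUnit_det _).1 hpd.isUnit), one_mulVec]⟩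
  refine ⟨∑ x, v x, ?_⟩
  rintro r ⟨w, hw, rfl⟩
  have hq : 0 < w ⬝ᵥ (simMat X *ᵥ w) := by
    simpa using hpd.dotProduct_mulVec_pos hw
  have hsymm : (simMat X)ᵀ = simMat X := by
    ext x y
    simp [simMat, dist_comm]
  have hvw : v ⬝ᵥ (simMat X *ᵥ w) = ∑ x, w x := by
    rw [dotProduct_mulVec, ← mulVec_transpose, hsymm, hv, one_dotProduct]
  rw [magRatio, quadForm_eq, div_le_iff₀ hq]
  set q := w ⬝ᵥ (simMat X *ᵥ w) with hqdef
  set s := ∑ x, w x with hs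
  -- Cauchy–Schwarz: the form evaluated at `s w - q v` equals `q (q ∑ v - s²)`.
  have h := hpd.posSemidef.dotProduct_mulVec_nonneg (s • w - q • v)
  have hexp : star (s • w - q • v) ⬝ᵥ (simMat X *ᵥ (s • w - q • v))
      = q * ((∑ x, v x) * q - s ^ 2) := by
    rw [star_trivial]
    simp only [mulVec_sub, mulVec_smul, sub_dotProduct, dotProduct_sub, smul_dotProduct,
      dotProduct_smul, hv, hvw, dotProduct_one, smul_eq_mul, Pi.sub_apply, Pi.smul_apply, Finset.sum_sub_distrib,
      ← Finset.mul_sum, ← hqdef, ← hs]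
    ring
  rw [hexp] at h
  linarith [nonneg_of_mul_nonneg_right h hq]

/-- Extension by zero preserves the quotient. -/
lemma magRatio_extend {B : Type*} [Fintype B] [MetricSpace B] (A : Set B) [Fintype A]
    (w : A → ℝ) :
    magRatio (Function.extend ((↑) : A → B) w 0) = magRatio w := by
  have hinj : Function.Injective ((↑) : A → B) := Subtype.val_injective
  have hzero : ∀ x ∉ Set.range ((↑) : A → B), Function.extend ((↑) : A → B) w 0 x = 0 :=
    fun x hx => Function.extend_apply' _ _ _ hx
  have hval : ∀ a : A, Function.extend ((↑) : A → B) w 0 a = w a :=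
    fun a => hinj.extend_apply _ _ a
  unfold magRatio
  congr 1
  · congr 1
    exact (Fintype.sum_of_injective _ hinj _ _ hzero fun a => (hval a).symm).symm
  · refine (Fintype.sum_of_injective _ hinj _ _ (fun x hx => ?_) fun a => ?_).symm
    · simp [hzero x hx]
    · refine Fintype.sum_of_injective _ hinj _ _ (fun y hy => ?_) fun b => ?_
      · simp [hzero y hy]
      · rw [hval, hval, Subtype.dist_eq]

/-- if `A ⊆ B` (with the induced metric) inside a finite positive definite metric
space `B`, then `|A| ≤ |B|`. -/
theorem stmt5 {B : Type*} [Fintype B] [MetricSpace B]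
    (hpd : (simMat B).PosDef) (A : Set B) [DecidablePred (· ∈ A)] :
    magnitude A ≤ magnitude B := by
  -- The bound `0 ≤ magnitude B` is what covers `A = ∅`, whose magnitude is `sSup ∅ = 0`.
  refine Real.sSup_le ?_ (Real.sSup_nonneg ?_)
  · rintro r ⟨w, hw, rfl⟩
    refine le_csSup (bddAbove_magRatio hpd)
      ⟨Function.extend ((↑) : A → B) w 0, fun h => hw ?_, (magRatio_extend A w).symm⟩
    funext a
    rw [← Subtype.val_injective.extend_apply w 0 a, h]
    rfl
  · rintro r ⟨w, hw, rfl⟩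
    have hq : 0 ≤ ∑ x, ∑ y, Real.exp (-dist x y) * w x * w y := by
      rw [quadForm_eq]
      simpa using hpd.posSemidef.dotProduct_mulVec_nonneg w
    exact div_nonneg (sq_nonneg _) hq
end

section
/- Let A be a nonempty subset of a positive definite metric space X such that M := sup{ |B| : B ⊆ A finite nonempty } < ∞. Let ε > 0 and let B be a nonempty finite subset of A with |B| > M − ε². Then for all finite subsets B₁, B₂ of A with B ⊆ B₁ and B ⊆ B₂, the weightings satisfy ‖w_{B₁} − w_{B₂}‖_W ≤ 2ε, where w_{B₁}, w_{B₂} are regarded as vectors indexed by B₁∪B₂ by extension with zeros and ‖u‖_W = (Σ_{x,y∈B₁∪B₂} e^{-d(x,y)} u_x u_y)^{1/2}. -/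
/-!
The pairing `quadW U` is a symmetric positive semidefinite bilinear form. If `S ⊆ T ⊆ U` have
weightings `w_S`, `w_T`, then `⟨w_S, w_T⟩ = |S|`, because `Z w_T = 𝟏` on `T ⊇ S`
(`quadW_weighting`). Hence `‖w_T - w_S‖² = |T| - |S|` (`quadW_sub_weighting`), so both
`w₁ - w_B` and `w₂ - w_B` have squared norm below `ε²`, as `|B₁|, |B₂| ≤ M < |B| + ε²`.
The parallelogram inequality `‖a - b‖² ≤ 2‖a‖² + 2‖b‖²` then gives `‖w₁ - w₂‖² ≤ 4ε²`.
-/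

open scoped BigOperators

/-- A metric space is positive definite if every finite subspace has positive definite
similarity matrix `(e^{-d(x,y)})`. -/
def PosDefSpace (X : Type*) [MetricSpace X] : Prop :=
  ∀ s : Finset X,
    Matrix.PosDef (Matrix.of fun x y : s => Real.exp (-dist (x : X) (y : X)))

/-- The pairing `Σ_{x,y∈s} e^{-d(x,y)} u_x v_y`. -/
noncomputable def quadW {X : Type*} [MetricSpace X] (s : Finset X) (u v : X → ℝ) : ℝ :=
  ∑ x ∈ s, ∑ y ∈ s, Real.exp (-dist x y) * u x * v y

/-- `w` is the weighting of the finite subset `s` (extended by zero outside `s`):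
the unique vector with `Z_s w = 𝟏` on `s`. -/
def IsWeighting {X : Type*} [MetricSpace X] (s : Finset X) (w : X → ℝ) : Prop :=
  (∀ x ∉ s, w x = 0) ∧ ∀ x ∈ s, ∑ y ∈ s, Real.exp (-dist x y) * w y = 1

/-- The set of magnitudes `|B| = Σ_x (w_B)_x` of finite nonempty subsets `B ⊆ A`. -/
def magSet {X : Type*} [MetricSpace X] (A : Set X) : Set ℝ :=
  {r : ℝ | ∃ (s : Finset X) (w : X → ℝ),
    s.Nonempty ∧ ↑s ⊆ A ∧ IsWeighting s w ∧ r = ∑ x ∈ s, w x}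

section QuadW

variable {X : Type*} [MetricSpace X]

theorem quadW_nonneg (hpd : PosDefSpace X) (U : Finset X) (u : X → ℝ) : 0 ≤ quadW U u u := by
  have h := (hpd U).posSemidef.dotProduct_mulVec_nonneg (fun x : U => u x)
  simp only [dotProduct, Matrix.mulVec, Matrix.of_apply, star_trivial, Finset.mul_sum] at h
  unfold quadW
  rw [← Finset.sum_coe_sort]
  refine h.trans_eq (Finset.sum_congr rfl fun x _ => ?_)
  rw [← Finset.sum_coe_sort U (fun y => Real.exp (-dist (x : X) y) * u x * u y)]
  exact Finset.sum_congr rfl fun y _ => by ring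

theorem quadW_comm (U : Finset X) (u v : X → ℝ) : quadW U u v = quadW U v u := by
  unfold quadW
  rw [Finset.sum_comm]
  refine Finset.sum_congr rfl fun x _ => Finset.sum_congr rfl fun y _ => ?_
  rw [dist_comm]
  ring

theorem quadW_sub_left (U : Finset X) (u v w : X → ℝ) :
    quadW U (u - v) w = quadW U u w - quadW U v w := by
  simp only [quadW, ← Finset.sum_sub_distrib, Pi.sub_apply]
  refine Finset.sum_congr rfl fun x _ => Finset.sum_congr rfl fun y _ => ?_
  ring

theorem quadW_add_left (U : Finset X) (u v w : X → ℝ) :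
    quadW U (u + v) w = quadW U u w + quadW U v w := by
  simp only [quadW, ← Finset.sum_add_distrib, Pi.add_apply]
  refine Finset.sum_congr rfl fun x _ => Finset.sum_congr rfl fun y _ => ?_
  ring

theorem quadW_sub_self (U : Finset X) (u v : X → ℝ) :
    quadW U (u - v) (u - v) = quadW U u u - 2 * quadW U v u + quadW U v v := by
  rw [quadW_sub_left, quadW_comm U u, quadW_comm U v, quadW_sub_left, quadW_sub_left,
    quadW_comm U u v]
  ring

theorem quadW_add_self (U : Finset X) (u v : X → ℝ) :
    quadW U (u + v) (u + v) = quadW U u u + 2 * quadW U v u + quadW U v v := by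
  rw [quadW_add_left, quadW_comm U u, quadW_comm U v, quadW_add_left, quadW_add_left,
    quadW_comm U u v]
  ring

theorem quadW_weighting {S T U : Finset X} (hST : S ⊆ T) (hTU : T ⊆ U) {w w' : X → ℝ}
    (hw : IsWeighting S w) (hw' : IsWeighting T w') : quadW U w w' = ∑ x ∈ S, w x := by
  unfold quadW
  rw [← Finset.sum_subset (hST.trans hTU) fun x _ hx => by simp [hw.1 x hx]]
  refine Finset.sum_congr rfl fun x hx => ?_
  rw [← Finset.sum_subset hTU fun y _ hy => by simp [hw'.1 y hy]]
  calc ∑ y ∈ T, Real.exp (-dist x y) * w x * w' y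
      = w x * ∑ y ∈ T, Real.exp (-dist x y) * w' y := by
        rw [Finset.mul_sum]
        exact Finset.sum_congr rfl fun y _ => by ring
    _ = w x := by rw [hw'.2 x (hST hx), mul_one]

theorem quadW_sub_weighting {S T U : Finset X} (hST : S ⊆ T) (hTU : T ⊆ U) {w w' : X → ℝ}
    (hw : IsWeighting S w) (hw' : IsWeighting T w') :
    quadW U (w' - w) (w' - w) = ∑ x ∈ T, w' x - ∑ x ∈ S, w x := by
  rw [quadW_sub_self, quadW_weighting subset_rfl hTU hw' hw', quadW_weighting hST hTU hw hw',
    quadW_weighting subset_rfl (hST.trans hTU) hw hw]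
  ring

end QuadW

/-- if `M = sup{|B| : B ⊆ A finite nonempty} < ∞`, `ε > 0` and `B ⊆ A` is a
finite nonempty subset with `|B| > M − ε²`, then any two finite subsets `B₁, B₂ ⊆ A`
containing `B` have weightings at `W`-distance at most `2ε`. -/
theorem stmt12 {X : Type*} [MetricSpace X] [DecidableEq X] (hpd : PosDefSpace X)
    (A : Set X) (hA : A.Nonempty) (M ε : ℝ) (hε : 0 < ε)
    (hM : M = sSup (magSet A)) (hbdd : BddAbove (magSet A))
    (B : Finset X) (wB : X → ℝ) (hBne : B.Nonempty) (hBA : ↑B ⊆ A)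
    (hwB : IsWeighting B wB) (hBmag : M - ε ^ 2 < ∑ x ∈ B, wB x)
    (B₁ B₂ : Finset X) (w₁ w₂ : X → ℝ)
    (hB₁A : ↑B₁ ⊆ A) (hB₂A : ↑B₂ ⊆ A) (hBB₁ : B ⊆ B₁) (hBB₂ : B ⊆ B₂)
    (hw₁ : IsWeighting B₁ w₁) (hw₂ : IsWeighting B₂ w₂) :
    Real.sqrt (quadW (B₁ ∪ B₂) (w₁ - w₂) (w₁ - w₂)) ≤ 2 * ε := by
  have h₁ : ∑ x ∈ B₁, w₁ x ≤ M :=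
    hM ▸ le_csSup hbdd ⟨B₁, w₁, hBne.mono hBB₁, hB₁A, hw₁, rfl⟩
  have h₂ : ∑ x ∈ B₂, w₂ x ≤ M :=
    hM ▸ le_csSup hbdd ⟨B₂, w₂, hBne.mono hBB₂, hB₂A, hw₂, rfl⟩
  have q₁ := quadW_sub_weighting hBB₁ (Finset.subset_union_left (s₂ := B₂)) hwB hw₁
  have q₂ := quadW_sub_weighting hBB₂ (Finset.subset_union_right (s₁ := B₁)) hwB hw₂
  have hsub := quadW_sub_self (B₁ ∪ B₂) (w₁ - wB) (w₂ - wB)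
  have hadd := quadW_add_self (B₁ ∪ B₂) (w₁ - wB) (w₂ - wB)
  have hpos := quadW_nonneg hpd (B₁ ∪ B₂) ((w₁ - wB) + (w₂ - wB))
  rw [sub_sub_sub_cancel_right] at hsub
  refine Real.sqrt_le_iff.mpr ⟨by positivity, ?_⟩
  nlinarith
end
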